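/- Assume strict feasibility of the primal problem, so that the set Z* of maximizers of D over ℝ₊^{4N} is nonempty and bounded, and let D* = sup{D(z) : z ∈ ℝ₊^{4N}}. Then for every ε > 0 there exists η > 0 such that every z ∈ ℝ₊^{4N} with D* − D(z) ≤ η satisfies dist(z, Z*) ≤ ε. -/

import Mathlib

open Matrix

noncomputable section

/-- Euclidean norm of a vector in ℝ^{4N}, represented as four blocks of ℝ^N. -/
def enorm4 {N : ℕ} (w : Fin 4 → Fin N → ℝ) : ℝ :=
  Real.sqrt (∑ b, ∑ i, w b i ^ 2)

/-- sign(x) = 1 if x ≥ 0 and −1 if x < 0. -/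
def sgn (x : ℝ) : ℝ := if 0 ≤ x then 1 else -1

/-- The (linearized) voltage map v(q) = A q + d. -/
def volt {N : ℕ} (A : Matrix (Fin N) (Fin N) ℝ) (d : Fin N → ℝ) (q : Fin N → ℝ) :
    Fin N → ℝ :=
  A *ᵥ q + d

/-- q(z) = λ^min − λ^max + A⁻¹(μ^min − μ^max). -/
def qOf {N : ℕ} (A : Matrix (Fin N) (Fin N) ℝ) (z : Fin 4 → Fin N → ℝ) : Fin N → ℝ :=
  z 0 - z 1 + A⁻¹ *ᵥ (z 2 - z 3)

/-- ∇D(z) = (v^min − v(q(z)), v(q(z)) − v^max, q^min − q(z), q(z) − q^max). -/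
def gradD {N : ℕ} (A : Matrix (Fin N) (Fin N) ℝ) (d vmin vmax qmin qmax : Fin N → ℝ)
    (z : Fin 4 → Fin N → ℝ) : Fin 4 → Fin N → ℝ :=
  ![vmin - volt A d (qOf A z), volt A d (qOf A z) - vmax,
    qmin - qOf A z, qOf A z - qmax]

/-- V(z) = ‖z − ⌈z + ∇D(z)⌉₊‖. -/
def Vfun {N : ℕ} (A : Matrix (Fin N) (Fin N) ℝ) (d vmin vmax qmin qmax : Fin N → ℝ)
    (z : Fin 4 → Fin N → ℝ) : ℝ :=
  enorm4 (fun b i => z b i - max (z b i + gradD A d vmin vmax qmin qmax z b i) 0)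

/-- The Lagrangian dual function
D(z) = inf_q [ (1/2) qᵀAq + (λ^min)ᵀ(v^min − v(q)) + (λ^max)ᵀ(v(q) − v^max)
  + (μ^min)ᵀ(q^min − q) + (μ^max)ᵀ(q − q^max) ]. -/
def dualFun {N : ℕ} (A : Matrix (Fin N) (Fin N) ℝ) (d vmin vmax qmin qmax : Fin N → ℝ)
    (z : Fin 4 → Fin N → ℝ) : ℝ :=
  ⨅ q : Fin N → ℝ,
    ((1 / 2) * (q ⬝ᵥ A *ᵥ q) + (z 0) ⬝ᵥ (vmin - volt A d q)
      + (z 1) ⬝ᵥ (volt A d q - vmax) + (z 2) ⬝ᵥ (qmin - q) + (z 3) ⬝ᵥ (q - qmax))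

/-- fes(q) = Euclidean distance from (q, v(q)) to the box [q^min,q^max] × [v^min,v^max]. -/
def fes {N : ℕ} (A : Matrix (Fin N) (Fin N) ℝ) (d vmin vmax qmin qmax : Fin N → ℝ)
    (q : Fin N → ℝ) : ℝ :=
  sInf { r : ℝ | ∃ y1 y2 : Fin N → ℝ,
    (∀ i, qmin i ≤ y1 i ∧ y1 i ≤ qmax i) ∧ (∀ i, vmin i ≤ y2 i ∧ y2 i ≤ vmax i) ∧
    r = Real.sqrt ((∑ i, (q i - y1 i) ^ 2) + ∑ i, (volt A d q i - y2 i) ^ 2) }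

/-!
Near-maximizers can be localized by compactness alone. If `f` is upper semicontinuous on `S` with
compact superlevel sets and `U` is an open set containing its maximizers, then the part of a
superlevel set outside `U` is compact, so `f` is bounded there by a constant strictly below its
maximum.

The dual function has these properties. As an infimum of affine functions of the multipliers it is
upper semicontinuous, and it lies below the Lagrangian at a Slater point `q`. That Lagrangian is a
constant minus a combination of the multipliers with strictly positive weights (the slacks of `q`),
so its superlevel sets in the nonnegative orthant are compact.
-/

section Maximizers

variable {E γ : Type*} [TopologicalSpace E] {S : Set E}

theorem exists_isMaxOn_of_isCompact_superlevel [LinearOrder γ] {f : E → γ}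
    (hf : UpperSemicontinuousOn f S) (hK : ∀ t, IsCompact {z ∈ S | t ≤ f z}) (hS : S.Nonempty) :
    ∃ m ∈ S, IsMaxOn f S m := by
  obtain ⟨z₀, hz₀⟩ := hS
  obtain ⟨m, ⟨hmS, hm₀⟩, hm⟩ := (hf.mono fun _ hz => hz.1).exists_isMaxOn
    (s := {z ∈ S | f z₀ ≤ f z}) ⟨z₀, hz₀, le_rfl⟩ (hK (f z₀))
  refine ⟨m, hmS, isMaxOn_iff.2 fun u hu => ?_⟩
  rcases le_total (f z₀) (f u) with h | h
  · exact hm ⟨hu, h⟩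
  · exact h.trans hm₀

theorem exists_lt_forall_le_of_isCompact [LinearOrder γ] [NoMinOrder γ] {f : E → γ} {M : γ}
    (hS : IsCompact S) (hf : UpperSemicontinuousOn f S) (hlt : ∀ z ∈ S, f z < M) :
    ∃ c < M, ∀ z ∈ S, f z ≤ c := by
  rcases S.eq_empty_or_nonempty with rfl | hne
  · obtain ⟨c, hc⟩ := exists_lt M
    exact ⟨c, hc, by simp⟩
  · obtain ⟨p, hpS, hp⟩ := hf.exists_isMaxOn hne hS
    exact ⟨f p, hlt p hpS, fun z hz => hp hz⟩

theorem exists_pos_forall_mem_of_sSup_sub_le {f : E → ℝ} {U : Set E}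
    (hf : UpperSemicontinuousOn f S) (hK : ∀ t, IsCompact {z ∈ S | t ≤ f z})
    (hU : IsOpen U) (hmaxU : {z ∈ S | IsMaxOn f S z} ⊆ U) :
    ∃ η : ℝ, 0 < η ∧ ∀ z ∈ S, sSup (f '' S) - f z ≤ η → z ∈ U := by
  rcases S.eq_empty_or_nonempty with rfl | hne
  · exact ⟨1, one_pos, by simp⟩
  obtain ⟨m, hmS, hm⟩ := exists_isMaxOn_of_isCompact_superlevel hf hK hne
  have hsup : sSup (f '' S) = f m :=
    IsGreatest.csSup_eq ⟨Set.mem_image_of_mem f hmS, Set.forall_mem_image.2 hm⟩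
  have hlt : ∀ z ∈ {z ∈ S | f m - 1 ≤ f z} \ U, f z < f m := fun z ⟨⟨hzS, _⟩, hzU⟩ =>
    lt_of_not_ge fun hle => hzU (hmaxU ⟨hzS, fun _ hu => (hm hu).trans hle⟩)
  obtain ⟨c, hc, hcle⟩ := exists_lt_forall_le_of_isCompact ((hK (f m - 1)).diff hU)
    (hf.mono fun _ hz => hz.1.1) hlt
  refine ⟨min 1 ((f m - c) / 2), lt_min one_pos (by linarith), fun z hzS hz => ?_⟩
  rw [hsup, le_min_iff] at hz
  by_contra hzU
  linarith [hcle z ⟨⟨hzS, by linarith⟩, hzU⟩]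

theorem isCompact_superlevel_ciInf [ConditionallyCompleteLinearOrder γ] {ι : Sort*}
    {L : ι → E → γ} (hL : ∀ i, UpperSemicontinuous (L i))
    (hbdd : ∀ z, BddBelow (Set.range fun i => L i z)) {t : γ} (i : ι)
    (hK : IsCompact {z ∈ S | t ≤ L i z}) : IsCompact {z ∈ S | t ≤ ⨅ i, L i z} := by
  have hclosed : IsClosed {z | t ≤ ⨅ i, L i z} :=
    (upperSemicontinuous_ciInf hbdd hL).isClosed_preimage t
  convert hK.inter_right hclosed using 1
  ext z
  exact ⟨fun ⟨hzS, ht⟩ => ⟨⟨hzS, ht.trans (ciInf_le (hbdd z) i)⟩, ht⟩,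
    fun ⟨⟨hzS, _⟩, ht⟩ => ⟨hzS, ht⟩⟩

end Maximizers

section Simplex

theorem isCompact_pi_sum_sublevel {ι : Type*} [Fintype ι] {E : ι → Type*}
    [∀ i, TopologicalSpace (E i)] {C : ∀ i, Set (E i)} {p : ∀ i, E i → ℝ}
    (hp : ∀ i, LowerSemicontinuous (p i)) (hnn : ∀ i, ∀ x ∈ C i, 0 ≤ p i x) {c : ℝ}
    (hK : ∀ i, IsCompact {x ∈ C i | p i x ≤ c}) :
    IsCompact {z : ∀ i, E i | (∀ i, z i ∈ C i) ∧ ∑ i, p i (z i) ≤ c} := by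
  have hclosed : IsClosed {z : ∀ i, E i | ∑ i, p i (z i) ≤ c} :=
    (lowerSemicontinuous_sum fun i _ => (hp i).comp (continuous_apply i)).isClosed_preimage c
  convert (isCompact_univ_pi hK).inter_right hclosed using 1
  ext z
  refine ⟨fun ⟨hz, hsum⟩ => ⟨fun i _ => ⟨hz i, ?_⟩, hsum⟩,
    fun ⟨hz, hsum⟩ => ⟨fun i => (hz i trivial).1, hsum⟩⟩
  exact (Finset.single_le_sum (fun j _ => hnn j (z j) (hz j)) (Finset.mem_univ i)).trans hsum

theorem isCompact_nonneg_dotProduct_le {ι : Type*} [Fintype ι] {s : ι → ℝ} (hs : ∀ i, 0 < s i)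
    (c : ℝ) : IsCompact {y : ι → ℝ | (∀ i, 0 ≤ y i) ∧ y ⬝ᵥ s ≤ c} := by
  refine isCompact_pi_sum_sublevel (C := fun _ => Set.Ici 0) (p := fun i x => x * s i)
    (fun i => (continuous_mul_const (s i)).lowerSemicontinuous)
    (fun i x hx => mul_nonneg hx (hs i).le) fun i => ?_
  convert isCompact_Icc (a := 0) (b := c / s i) using 1
  ext x
  exact and_congr_right fun _ => (le_div_iff₀ (hs i)).symm

theorem isCompact_nonneg_sum_dotProduct_le {κ ι : Type*} [Fintype κ] [Fintype ι] {s : κ → ι → ℝ}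
    (hs : ∀ b i, 0 < s b i) (c : ℝ) :
    IsCompact {z : κ → ι → ℝ | (∀ b i, 0 ≤ z b i) ∧ ∑ b, z b ⬝ᵥ s b ≤ c} :=
  isCompact_pi_sum_sublevel (C := fun _ : κ => {y : ι → ℝ | ∀ i, 0 ≤ y i})
    (p := fun b y => y ⬝ᵥ s b)
    (fun _ => (continuous_id.dotProduct continuous_const).lowerSemicontinuous)
    (fun b _ hy => dotProduct_nonneg_of_nonneg hy fun i => (hs b i).le)
    fun b => isCompact_nonneg_dotProduct_le (hs b) c

end Simplex

section Quadratic

variable {n : Type*} [Fintype n] {A : Matrix n n ℝ}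

theorem neg_half_dotProduct_le_quadratic_of_posSemidef (hA : A.PosSemidef) (p q : n → ℝ) :
    -(1 / 2 * (p ⬝ᵥ A *ᵥ p)) ≤ 1 / 2 * (q ⬝ᵥ A *ᵥ q) + (A *ᵥ p) ⬝ᵥ q := by
  have hsymm : p ⬝ᵥ A *ᵥ q = (A *ᵥ p) ⬝ᵥ q := by
    rw [dotProduct_mulVec, ← mulVec_transpose, show Aᵀ = A from hA.isHermitian]
  have hsq : 0 ≤ (p + q) ⬝ᵥ A *ᵥ (p + q) := hA.dotProduct_mulVec_nonneg (p + q)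
  rw [mulVec_add, dotProduct_add, add_dotProduct, add_dotProduct, hsymm,
    dotProduct_comm q (A *ᵥ p)] at hsq
  linarith

theorem exists_le_quadratic_of_posDef (hA : A.PosDef) (b : n → ℝ) :
    ∃ m : ℝ, ∀ q : n → ℝ, m ≤ 1 / 2 * (q ⬝ᵥ A *ᵥ q) + b ⬝ᵥ q := by
  classical
  obtain ⟨p, rfl⟩ := mulVec_surjective_iff_isUnit.2 hA.isUnit b
  exact ⟨_, neg_half_dotProduct_le_quadratic_of_posSemidef hA.posSemidef p⟩

end Quadratic

section Dual

variable {N : ℕ} {A : Matrix (Fin N) (Fin N) ℝ} {d vmin vmax qmin qmax : Fin N → ℝ}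

/-- The primal constraint function, whose blocks are ordered as those of the multipliers
`(λ^min, λ^max, μ^min, μ^max)`: the point `q` is feasible when all entries are nonpositive. -/
def constraintFun (A : Matrix (Fin N) (Fin N) ℝ) (d vmin vmax qmin qmax q : Fin N → ℝ) :
    Fin 4 → Fin N → ℝ :=
  ![vmin - volt A d q, volt A d q - vmax, qmin - q, q - qmax]

/-- The Lagrangian of the primal problem, with the primal variable first so that it is an indexed
family of functions of the multipliers. -/
def lagrangian (A : Matrix (Fin N) (Fin N) ℝ) (d vmin vmax qmin qmax q : Fin N → ℝ)
    (z : Fin 4 → Fin N → ℝ) : ℝ :=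
  1 / 2 * (q ⬝ᵥ A *ᵥ q) + ∑ b, z b ⬝ᵥ constraintFun A d vmin vmax qmin qmax q b

theorem dualFun_eq_iInf_lagrangian :
    dualFun A d vmin vmax qmin qmax = fun z => ⨅ q, lagrangian A d vmin vmax qmin qmax q z := by
  ext z
  simp [dualFun, lagrangian, constraintFun, Fin.sum_univ_four, add_assoc]

theorem continuous_lagrangian (q : Fin N → ℝ) :
    Continuous (lagrangian A d vmin vmax qmin qmax q) := by
  unfold lagrangian
  fun_prop

theorem bddBelow_range_lagrangian (hA : A.PosDef) (z : Fin 4 → Fin N → ℝ) :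
    BddBelow (Set.range fun q => lagrangian A d vmin vmax qmin qmax q z) := by
  let slope : Fin N → ℝ := (z 1 - z 0) ᵥ* A + (z 3 - z 2)
  let const : ℝ := z 0 ⬝ᵥ (vmin - d) + z 1 ⬝ᵥ (d - vmax) + z 2 ⬝ᵥ qmin - z 3 ⬝ᵥ qmax
  have heq : ∀ q, lagrangian A d vmin vmax qmin qmax q z =
      1 / 2 * (q ⬝ᵥ A *ᵥ q) + slope ⬝ᵥ q + const := fun q => by
    simp only [lagrangian, constraintFun, volt, slope, const, Fin.sum_univ_four, Fin.isValue,
      cons_val_zero, cons_val_one, cons_val, dotProduct_mulVec, dotProduct_sub, dotProduct_add,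
      add_dotProduct, sub_dotProduct, sub_vecMul]
    ring
  obtain ⟨m, hm⟩ := exists_le_quadratic_of_posDef hA slope
  exact ⟨m + const, Set.forall_mem_range.2 fun q => by linarith [heq q, hm q]⟩

theorem upperSemicontinuous_dualFun (hA : A.PosDef) :
    UpperSemicontinuous (dualFun A d vmin vmax qmin qmax) := by
  rw [dualFun_eq_iInf_lagrangian]
  exact upperSemicontinuous_ciInf (bddBelow_range_lagrangian hA)
    fun q => (continuous_lagrangian q).upperSemicontinuous

theorem isCompact_superlevel_lagrangian {q : Fin N → ℝ}
    (hslater : ∀ b i, constraintFun A d vmin vmax qmin qmax q b i < 0) (t : ℝ) :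
    IsCompact {z ∈ {z : Fin 4 → Fin N → ℝ | ∀ b i, 0 ≤ z b i} |
      t ≤ lagrangian A d vmin vmax qmin qmax q z} := by
  convert isCompact_nonneg_sum_dotProduct_le
    (s := -constraintFun A d vmin vmax qmin qmax q) (fun b i => neg_pos.2 (hslater b i))
    (1 / 2 * (q ⬝ᵥ A *ᵥ q) - t) using 1
  ext z
  refine and_congr_right fun _ => ?_
  simp only [lagrangian, Pi.neg_apply, dotProduct_neg, Finset.sum_neg_distrib]
  constructor <;> intro h <;> linarith

theorem isCompact_superlevel_dualFun (hA : A.PosDef) {q : Fin N → ℝ}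
    (hslater : ∀ b i, constraintFun A d vmin vmax qmin qmax q b i < 0) (t : ℝ) :
    IsCompact {z ∈ {z : Fin 4 → Fin N → ℝ | ∀ b i, 0 ≤ z b i} |
      t ≤ dualFun A d vmin vmax qmin qmax z} := by
  rw [dualFun_eq_iInf_lagrangian]
  exact isCompact_superlevel_ciInf (fun q => (continuous_lagrangian q).upperSemicontinuous)
    (bddBelow_range_lagrangian hA) q (isCompact_superlevel_lagrangian hslater t)

theorem constraintFun_neg {q : Fin N → ℝ} (hq : ∀ i, qmin i < q i ∧ q i < qmax i)
    (hv : ∀ i, vmin i < volt A d q i ∧ volt A d q i < vmax i) (b : Fin 4) (i : Fin N) :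
    constraintFun A d vmin vmax qmin qmax q b i < 0 := by
  fin_cases b <;> simp [constraintFun, hq i, hv i]

end Dual

section Distance

variable {N : ℕ}

theorem isOpen_setOf_exists_enorm4_sub_lt (Z : Set (Fin 4 → Fin N → ℝ)) (ε : ℝ) :
    IsOpen {z | ∃ w ∈ Z, enorm4 (z - w) < ε} := by
  have hcont : Continuous (enorm4 (N := N)) := by
    unfold enorm4
    fun_prop
  have hunion : {z | ∃ w ∈ Z, enorm4 (z - w) < ε} = ⋃ w ∈ Z, {z | enorm4 (z - w) < ε} := by
    ext z
    simp
  rw [hunion]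
  exact isOpen_biUnion fun w _ =>
    isOpen_lt (hcont.comp (continuous_id.sub continuous_const)) continuous_const

theorem sInf_image_enorm4_sub_le {Z : Set (Fin 4 → Fin N → ℝ)} {w : Fin 4 → Fin N → ℝ}
    (hw : w ∈ Z) (z : Fin 4 → Fin N → ℝ) :
    sInf ((fun w => enorm4 (z - w)) '' Z) ≤ enorm4 (z - w) :=
  csInf_le ⟨0, Set.forall_mem_image.2 fun _ _ => Real.sqrt_nonneg _⟩ (Set.mem_image_of_mem _ hw)

end Distance

/-- Lemma 6: under strict feasibility (so the set Z* of dual maximizers is nonempty and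
bounded), for every ε > 0 there is η > 0 such that every z ∈ ℝ₊^{4N} with
D* − D(z) ≤ η satisfies dist(z, Z*) ≤ ε (Euclidean distance from z to Z*). -/
theorem stmt_16 (N : ℕ) (hN : 0 < N) (A : Matrix (Fin N) (Fin N) ℝ) (hA : A.PosDef)
    (d vmin vmax qmin qmax : Fin N → ℝ)
    (hv : ∀ i, vmin i ≤ vmax i) (hq : ∀ i, qmin i ≤ qmax i)
    (hstrict : ∃ q : Fin N → ℝ, (∀ i, qmin i < q i ∧ q i < qmax i) ∧
      ∀ i, vmin i < volt A d q i ∧ volt A d q i < vmax i) :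
    ∀ ε : ℝ, 0 < ε → ∃ η : ℝ, 0 < η ∧
      ∀ z : Fin 4 → Fin N → ℝ, (∀ b i, 0 ≤ z b i) →
        sSup (dualFun A d vmin vmax qmin qmax '' {w | ∀ b i, 0 ≤ w b i})
            - dualFun A d vmin vmax qmin qmax z ≤ η →
        sInf ((fun w : Fin 4 → Fin N → ℝ => enorm4 (fun b i => z b i - w b i)) ''
            {w : Fin 4 → Fin N → ℝ | (∀ b i, 0 ≤ w b i) ∧
              ∀ u : Fin 4 → Fin N → ℝ, (∀ b i, 0 ≤ u b i) →
                dualFun A d vmin vmax qmin qmax u ≤ dualFun A d vmin vmax qmin qmax w})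
          ≤ ε := by
  intro ε hε
  obtain ⟨q, hqbox, hvbox⟩ := hstrict
  let S : Set (Fin 4 → Fin N → ℝ) := {z | ∀ b i, 0 ≤ z b i}
  let Zopt := {w ∈ S | IsMaxOn (dualFun A d vmin vmax qmin qmax) S w}
  have hZopt : Zopt ⊆ {z | ∃ w ∈ Zopt, enorm4 (z - w) < ε} :=
    fun w hw => ⟨w, hw, by simpa [enorm4] using hε⟩
  obtain ⟨η, hη, hnear⟩ := exists_pos_forall_mem_of_sSup_sub_le
    ((upperSemicontinuous_dualFun hA).upperSemicontinuousOn S)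
    (isCompact_superlevel_dualFun hA (constraintFun_neg hqbox hvbox))
    (isOpen_setOf_exists_enorm4_sub_lt Zopt ε) hZopt
  refine ⟨η, hη, fun z hz hgap => ?_⟩
  obtain ⟨w, hw, hzw⟩ := hnear z hz hgap
  exact (sInf_image_enorm4_sub_le hw z).trans hzw.le

end
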